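/- arXiv:1902.08720 — 3 statements merged into one kernel-verified Lean document; each statement's English description precedes it below -/
import Mathlib

section
/- Let m, n be natural numbers and let α : {0,…,m+n} → {0,…,m} and α' : {0,…,m+n} → {0,…,n} be order-preserving maps. Then the pair ⟨α,α'⟩ is an (m,n)-shuffle (i.e. α and α' are surjective and α(i) + α'(i) = i for all i) if and only if the map i ↦ (α(i), α'(i)) into the product poset {0,…,m} × {0,…,n} is strictly monotone, sends 0 to (0,0), and sends m+n to (m,n). (This expresses that (m,n)-shuffles are exactly the non-degenerate (m+n)-simplices of Δ[m] × Δ[n].) -/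
/-- Extend a map `Fin (N+1) → Fin (M+1)` to a `ℕ`-valued map on all of `ℕ`,
clamping the input to the range `{0, …, N}`. -/
def extendFin {N M : ℕ} (f : Fin (N + 1) → Fin (M + 1)) (i : ℕ) : ℕ :=
  (f ⟨min i N, Nat.lt_succ_of_le (min_le_right i N)⟩ : ℕ)

/-- `⟨α, α'⟩` is an `(m,n)`-shuffle: both maps are monotone surjections and
`α i + α' i = i` for all `i`. -/
def IsShuffle (m n : ℕ) (α : Fin (m + n + 1) → Fin (m + 1))
    (α' : Fin (m + n + 1) → Fin (n + 1)) : Prop :=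
  Monotone α ∧ Monotone α' ∧ Function.Surjective α ∧ Function.Surjective α' ∧
    ∀ i : Fin (m + n + 1), (α i : ℕ) + (α' i : ℕ) = (i : ℕ)

/-- The pointwise order on `(m,n)`-shuffles (a shuffle is determined by its
first component). -/
def ShuffleLE (m n : ℕ) (α β : Fin (m + n + 1) → Fin (m + 1)) : Prop :=
  ∀ i, α i ≤ β i

/-- The strict pointwise order on `(m,n)`-shuffles. -/
def ShuffleLT (m n : ℕ) (α β : Fin (m + n + 1) → Fin (m + 1)) : Prop :=
  ShuffleLE m n α β ∧ α ≠ β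

/-- The lower-right corner set `⌞⟨α,α'⟩`: all `i` with `1 ≤ i ≤ m+n-1` such that
`α(i+1) = α(i) = α(i-1)+1`. -/
def lrCorner (m n : ℕ) (α : Fin (m + n + 1) → Fin (m + 1)) : Set ℕ :=
  {i | 1 ≤ i ∧ i + 1 ≤ m + n ∧
    extendFin α (i + 1) = extendFin α i ∧ extendFin α i = extendFin α (i - 1) + 1}

/-- The upper-left corner set `⌜⟨α,α'⟩`: all `i` with `1 ≤ i ≤ m+n-1` such that
`α(i+1) = α(i)+1 = α(i-1)+1`. -/
def ulCorner (m n : ℕ) (α : Fin (m + n + 1) → Fin (m + 1)) : Set ℕ :=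
  {i | 1 ≤ i ∧ i + 1 ≤ m + n ∧
    extendFin α (i + 1) = extendFin α i + 1 ∧ extendFin α i = extendFin α (i - 1)}

/-- `⟨β,β'⟩` is an immediate predecessor of `⟨α,α'⟩`: it is a shuffle, `β < α`,
and no shuffle lies strictly between them. -/
def IsImmPred (m n : ℕ)
    (β : Fin (m + n + 1) → Fin (m + 1)) (β' : Fin (m + n + 1) → Fin (n + 1))
    (α : Fin (m + n + 1) → Fin (m + 1)) (α' : Fin (m + n + 1) → Fin (n + 1)) : Prop :=
  IsShuffle m n β β' ∧ ShuffleLT m n β α ∧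
    ∀ (γ : Fin (m + n + 1) → Fin (m + 1)) (γ' : Fin (m + n + 1) → Fin (n + 1)),
      IsShuffle m n γ γ' → ¬ (ShuffleLT m n β γ ∧ ShuffleLT m n γ α)

/-- `⟨γ,γ'⟩` is an immediate successor of `⟨α,α'⟩`: it is a shuffle, `α < γ`,
and no shuffle lies strictly between them. -/
def IsImmSucc (m n : ℕ)
    (γ : Fin (m + n + 1) → Fin (m + 1)) (γ' : Fin (m + n + 1) → Fin (n + 1))
    (α : Fin (m + n + 1) → Fin (m + 1)) (α' : Fin (m + n + 1) → Fin (n + 1)) : Prop :=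
  IsShuffle m n γ γ' ∧ ShuffleLT m n α γ ∧
    ∀ (δ : Fin (m + n + 1) → Fin (m + 1)) (δ' : Fin (m + n + 1) → Fin (n + 1)),
      IsShuffle m n δ δ' → ¬ (ShuffleLT m n α δ ∧ ShuffleLT m n δ γ)

/-!
The rank `(a, b) ↦ a + b` is a strictly monotone map from `[m] × [n]` onto `[m + n]`, and the only
strictly monotone self-map of the finite chain `[m + n]` is the identity. Hence a monotone map
`[m + n] → [m] × [n]` is strictly monotone exactly when the rank is a left inverse of it, that is,
when its coordinates `α`, `α'` satisfy `α i + α' i = i`. Such a map preserves `⊥` and `⊤`, because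
no other element has the rank of `⊥` or `⊤`; and since neither coordinate decreases, each grows by
at most one at every step, so it skips no value between its endpoints.
-/

open Function Set

section StrictMonoLeftInverse

variable {P Q : Type*} [PartialOrder P] {r : P → Q} {f : Q → P}

theorem strictMono_iff_leftInverse [LinearOrder Q] [Finite Q] (hr : StrictMono r)
    (hf : Monotone f) : StrictMono f ↔ LeftInverse r f where
  mp hf' := congrFun (hr.comp hf').eq_id
  mpr h := hf.strictMono_of_injective h.injective

theorem map_bot_of_strictMono_of_leftInverse [Preorder Q] [OrderBot P] [OrderBot Q]
    (hr : StrictMono r) (h : LeftInverse r f) : f ⊥ = ⊥ := by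
  by_contra hne
  exact not_lt_bot ((hr (bot_lt_iff_ne_bot.2 hne)).trans_eq (h ⊥))

theorem map_top_of_strictMono_of_leftInverse [Preorder Q] [OrderTop P] [OrderTop Q]
    (hr : StrictMono r) (h : LeftInverse r f) : f ⊤ = ⊤ :=
  map_bot_of_strictMono_of_leftInverse (P := Pᵒᵈ) (Q := Qᵒᵈ) hr.dual h

end StrictMonoLeftInverse

theorem surjOn_Icc_of_map_succ_le_succ {P Q : Type*} [PartialOrder P] [SuccOrder P]
    [IsSuccArchimedean P] [LinearOrder Q] [SuccOrder Q] {f : P → Q}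
    (hf : ∀ i, f (Order.succ i) ≤ Order.succ (f i)) {a b : P} (hab : a ≤ b) :
    SurjOn f (Icc a b) (Icc (f a) (f b)) := by
  induction hab using Succ.rec with
  | rfl => simp
  | succ b hab ih =>
    rintro k ⟨hak, hkb⟩
    rcases le_or_gt k (f b) with hk | hk
    · exact image_mono (Icc_subset_Icc_right (Order.le_succ b)) (ih ⟨hak, hk⟩)
    · have hbk : f (Order.succ b) ≤ k := (hf b).trans (Order.succ_le_of_lt hk)
      exact ⟨Order.succ b, ⟨hab.trans (Order.le_succ b), le_rfl⟩, hbk.antisymm hkb⟩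

theorem surjective_of_add_eq_val {N m : ℕ} {f : Fin (N + 1) → Fin (m + 1)} {g : Fin (N + 1) → ℕ}
    (hg : Monotone g) (h : ∀ i, (f i : ℕ) + g i = i) (hf : f ⊤ = ⊤) : Surjective f := by
  have hstep (i : Fin (N + 1)) : (f (Order.succ i) : ℕ) ≤ Order.succ (f i : ℕ) := by
    have hsucc : ((Order.succ i : Fin (N + 1)) : ℕ) ≤ i + 1 := by
      cases i using Fin.lastCases <;> simp
    have hgi := hg (Order.le_succ i)
    have hi := h i
    have hi' := h (Order.succ i)
    rw [Nat.succ_eq_succ]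
    omega
  have hbot : (f ⊥ : ℕ) = 0 := Nat.eq_zero_of_add_eq_zero_right (h ⊥)
  intro k
  have hk : (k : ℕ) ∈ Icc (f ⊥ : ℕ) (f ⊤ : ℕ) :=
    ⟨hbot.le.trans (Nat.zero_le k), Fin.le_def.1 (hf ▸ le_top)⟩
  obtain ⟨i, -, hi⟩ :=
    surjOn_Icc_of_map_succ_le_succ (f := fun i => (f i : ℕ)) hstep bot_le hk
  exact ⟨i, Fin.ext hi⟩

/-- The rank function of the graded poset `[m] × [n]`, with values in the chain `[m + n]` so that
its composite with a map `[m + n] → [m] × [n]` is a self-map. -/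
def finProdRank {m n : ℕ} (p : Fin (m + 1) × Fin (n + 1)) : Fin (m + n + 1) :=
  ⟨p.1 + p.2, by omega⟩

section finProdRank

variable {m n : ℕ}

theorem finProdRank_strictMono : StrictMono (finProdRank (m := m) (n := n)) := by
  intro p q hpq
  rcases Prod.lt_iff.1 hpq with ⟨h₁, h₂⟩ | ⟨h₁, h₂⟩
  · exact Nat.add_lt_add_of_lt_of_le h₁ h₂
  · exact Nat.add_lt_add_of_le_of_lt h₁ h₂

theorem leftInverse_finProdRank_iff {f : Fin (m + n + 1) → Fin (m + 1) × Fin (n + 1)} :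
    LeftInverse finProdRank f ↔ ∀ i, ((f i).1 : ℕ) + ((f i).2 : ℕ) = i :=
  forall_congr' fun _ => Fin.ext_iff

end finProdRank

/-- A pair of monotone maps `α : [m+n] → [m]`, `α' : [m+n] → [n]` is an
`(m,n)`-shuffle iff `i ↦ (α i, α' i)` is a strictly monotone map into the product
poset sending `0` to `(0,0)` and `m+n` to `(m,n)`. -/
theorem shuffle_iff_strictMono (m n : ℕ)
    (α : Fin (m + n + 1) → Fin (m + 1)) (α' : Fin (m + n + 1) → Fin (n + 1))
    (hα : Monotone α) (hα' : Monotone α') :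
    (Function.Surjective α ∧ Function.Surjective α' ∧
        ∀ i : Fin (m + n + 1), (α i : ℕ) + (α' i : ℕ) = (i : ℕ)) ↔
      (StrictMono (fun i : Fin (m + n + 1) => (α i, α' i)) ∧
        α 0 = 0 ∧ α' 0 = 0 ∧
        α (Fin.last (m + n)) = Fin.last m ∧ α' (Fin.last (m + n)) = Fin.last n) := by
  have hrank : StrictMono (fun i => (α i, α' i)) ↔ ∀ i, (α i : ℕ) + (α' i : ℕ) = i :=
    (strictMono_iff_leftInverse finProdRank_strictMono (hα.prodMk hα')).trans
      leftInverse_finProdRank_iff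
  constructor
  · rintro ⟨-, -, hadd⟩
    have hinv : LeftInverse finProdRank fun i => (α i, α' i) := leftInverse_finProdRank_iff.2 hadd
    obtain ⟨h₀, h₀'⟩ :=
      Prod.ext_iff.1 (map_bot_of_strictMono_of_leftInverse finProdRank_strictMono hinv)
    obtain ⟨h₁, h₁'⟩ :=
      Prod.ext_iff.1 (map_top_of_strictMono_of_leftInverse finProdRank_strictMono hinv)
    exact ⟨hrank.2 hadd, h₀, h₀', h₁, h₁'⟩
  · rintro ⟨hmono, -, -, h₁, h₁'⟩
    have hadd := hrank.1 hmono
    have hadd' (i : Fin (m + n + 1)) : (α' i : ℕ) + (α i : ℕ) = i := (add_comm _ _).trans (hadd i)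
    exact ⟨surjective_of_add_eq_val hα' hadd h₁, surjective_of_add_eq_val hα hadd' h₁', hadd⟩
end

section
/- Let ⟨α,α'⟩ and ⟨β,β'⟩ be (m,n)-shuffles. If α(i) = β(i) (equivalently α'(i) = β'(i)) for every i in the lower-right corner set ⌞⟨α,α'⟩, then ⟨α,α'⟩ ≤ ⟨β,β'⟩, i.e. α(i) ≤ β(i) for all i ∈ {0,…,m+n}. -/
/-!
Between two consecutive lower-right corners `c < d`, the map `α` is first constant and then climbs
by `1` at every step. On the flat part `α i = α c ≤ β c ≤ β i`, as `β` is monotone. On the rising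
part `α i = α d - (d - i) ≤ β d - (d - i) ≤ β i`, as `β` climbs by at most `1` per step. The two
endpoints, where `α` and `β` agree, act as corners, and the inequality `α ≤ β` at the corners
suffices.
-/

section LatticePath

variable {M : Type*} [Add M] [One M] [Preorder M] [AddRightReflectLE M] {N : ℕ} {a b : ℕ → M}

theorem le_after_rise_of_le_on_corners
    (ha : ∀ i < N, a (i + 1) = a i ∨ a (i + 1) = a i + 1)
    (hb_step : ∀ i < N, b (i + 1) ≤ b i + 1)
    (hcorner : ∀ i, i + 1 < N → a (i + 1) = a i + 1 → a (i + 2) = a (i + 1) →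
      a (i + 1) ≤ b (i + 1))
    (hlast : a N ≤ b N) {i : ℕ} (hi : i < N) (hrise : a (i + 1) = a i + 1) :
    a (i + 1) ≤ b (i + 1) := by
  obtain hlt | rfl : i + 1 < N ∨ i + 1 = N := Nat.lt_or_eq_of_le hi
  · rcases ha (i + 1) hlt with hflat | hrise_next
    · exact hcorner i hlt hrise hflat
    · refine le_of_add_le_add_right (a := 1) ?_
      calc a (i + 1) + 1 = a (i + 2) := hrise_next.symm
        _ ≤ b (i + 2) := le_after_rise_of_le_on_corners ha hb_step hcorner hlast hlt hrise_next
        _ ≤ b (i + 1) + 1 := hb_step (i + 1) hlt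
  · exact hlast
termination_by N - i

theorem le_of_le_on_corners
    (ha : ∀ i < N, a (i + 1) = a i ∨ a (i + 1) = a i + 1)
    (hb_mono : ∀ i < N, b i ≤ b (i + 1)) (hb_step : ∀ i < N, b (i + 1) ≤ b i + 1)
    (hcorner : ∀ i, i + 1 < N → a (i + 1) = a i + 1 → a (i + 2) = a (i + 1) →
      a (i + 1) ≤ b (i + 1))
    (hzero : a 0 ≤ b 0) (hlast : a N ≤ b N) {i : ℕ} (hi : i ≤ N) : a i ≤ b i := by
  induction i with
  | zero => exact hzero
  | succ i ih =>
    rcases ha i hi with hflat | hrise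
    · calc a (i + 1) = a i := hflat
        _ ≤ b i := ih (Nat.le_of_succ_le hi)
        _ ≤ b (i + 1) := hb_mono i hi
    · exact le_after_rise_of_le_on_corners ha hb_step hcorner hlast hi hrise

end LatticePath

section ExtendFin

variable {N M : ℕ} (f : Fin (N + 1) → Fin (M + 1))

theorem extendFin_val (i : Fin (N + 1)) : extendFin f i = f i := by
  simp only [extendFin, min_eq_left i.is_le]

theorem extendFin_le (i : ℕ) : extendFin f i ≤ M :=
  Fin.is_le _

variable {f} in
theorem monotone_extendFin (hf : Monotone f) : Monotone (extendFin f) :=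
  fun _ _ hij => hf (Fin.mk_le_mk.mpr (min_le_min_right N hij))

end ExtendFin

namespace IsShuffle

variable {m n : ℕ} {α : Fin (m + n + 1) → Fin (m + 1)} {α' : Fin (m + n + 1) → Fin (n + 1)}

theorem extendFin_add_extendFin (hα : IsShuffle m n α α') {i : ℕ} (hi : i ≤ m + n) :
    extendFin α i + extendFin α' i = i := by
  obtain ⟨-, -, -, -, hadd⟩ := hα
  lift i to Fin (m + n + 1) using Nat.lt_succ_of_le hi
  simpa only [extendFin_val] using hadd i

theorem extendFin_zero (hα : IsShuffle m n α α') : extendFin α 0 = 0 :=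
  Nat.eq_zero_of_add_eq_zero_right (hα.extendFin_add_extendFin (Nat.zero_le _))

theorem extendFin_last (hα : IsShuffle m n α α') : extendFin α (m + n) = m := by
  have hadd := hα.extendFin_add_extendFin le_rfl
  have hle := extendFin_le α (m + n)
  have hle' := extendFin_le α' (m + n)
  omega

theorem extendFin_le_succ (hα : IsShuffle m n α α') (i : ℕ) :
    extendFin α i ≤ extendFin α (i + 1) :=
  monotone_extendFin hα.1 i.le_succ

theorem extendFin_succ_le (hα : IsShuffle m n α α') {i : ℕ} (hi : i < m + n) :
    extendFin α (i + 1) ≤ extendFin α i + 1 := by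
  have hadd := hα.extendFin_add_extendFin hi.le
  have hadd_succ := hα.extendFin_add_extendFin (i := i + 1) hi
  have hmono' : extendFin α' i ≤ extendFin α' (i + 1) := monotone_extendFin hα.2.1 i.le_succ
  omega

theorem extendFin_succ_eq_or (hα : IsShuffle m n α α') {i : ℕ} (hi : i < m + n) :
    extendFin α (i + 1) = extendFin α i ∨ extendFin α (i + 1) = extendFin α i + 1 :=
  Nat.le_and_le_add_one_iff.mp ⟨hα.extendFin_le_succ i, hα.extendFin_succ_le hi⟩

end IsShuffle

theorem shuffle_le_of_eq_on_lrCorner_general {m n : ℕ}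
    {α β : Fin (m + n + 1) → Fin (m + 1)} {α' β' : Fin (m + n + 1) → Fin (n + 1)}
    (hα : IsShuffle m n α α') (hβ : IsShuffle m n β β')
    (h : ∀ i ∈ lrCorner m n α, extendFin α i ≤ extendFin β i) :
    ShuffleLE m n α β := by
  intro i
  have hpath : extendFin α i ≤ extendFin β i :=
    le_of_le_on_corners (fun _ => hα.extendFin_succ_eq_or)
      (fun j _ => hβ.extendFin_le_succ j) (fun _ => hβ.extendFin_succ_le)
      (fun j hj hrise hflat => h (j + 1) ⟨j.succ_pos, hj, hflat, hrise⟩)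
      (hα.extendFin_zero.trans hβ.extendFin_zero.symm).le
      (hα.extendFin_last.trans hβ.extendFin_last.symm).le i.is_le
  simpa only [extendFin_val, Fin.val_fin_le] using hpath

/-- If two `(m,n)`-shuffles agree on the lower-right corner set of the first one,
then the first is below the second. -/
theorem shuffle_le_of_eq_on_lrCorner (m n : ℕ)
    (α : Fin (m + n + 1) → Fin (m + 1)) (α' : Fin (m + n + 1) → Fin (n + 1))
    (β : Fin (m + n + 1) → Fin (m + 1)) (β' : Fin (m + n + 1) → Fin (n + 1))
    (hα : IsShuffle m n α α') (hβ : IsShuffle m n β β')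
    (h : ∀ i ∈ lrCorner m n α, extendFin α i = extendFin β i) :
    ShuffleLE m n α β :=
  shuffle_le_of_eq_on_lrCorner_general hα hβ fun i hi => (h i hi).le
end

section
/- Let m, n, u be natural numbers and let ζ : {0,…,u} → {0,…,m} and ζ' : {0,…,u} → {0,…,n} be order-preserving maps. Then there exist an (m,n)-shuffle ⟨β,β'⟩ and an order-preserving map φ : {0,…,u} → {0,…,m+n} such that ζ = β ∘ φ and ζ' = β' ∘ φ. (This expresses that the (m,n)-shuffles are the maximal non-degenerate simplices of Δ[m] × Δ[n]: every simplex of the product factors through a shuffle.) -/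
/-!
A maximal chain of `[m] × [n]` climbs from `(0, 0)` to `(m, n)` by steps that raise exactly one
coordinate by one. Hence `p ↦ p.1 + p.2` identifies it with `[m + n]`, and under this identification
the two coordinates form a shuffle. The pairs `(ζ i, ζ' i)` form a chain; extend it to a maximal one
and let `φ i = ζ i + ζ' i`.
-/

section Flag

variable {α β : Type*} [PartialOrder α] [BoundedOrder α] [WellFoundedLT α] [WellFoundedGT α]
  [LinearOrder β] [BoundedOrder β] {f : α → β}

theorem surjective_of_covBy_imp_wcovBy (hf : ∀ a b, a ⋖ b → f a ⩿ f b)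
    (hbot : f ⊥ = ⊥) (htop : f ⊤ = ⊤) : Function.Surjective f := by
  intro c
  -- If `f a < c` at a maximal `a` with `f a ≤ c`, then `f` jumps over `c` on a cover of `a`.
  obtain ⟨a, ha⟩ := exists_maximal_of_wellFoundedGT (fun a ↦ f a ≤ c) ⟨⊥, hbot ▸ bot_le⟩
  refine ⟨a, ha.prop.eq_of_not_lt fun hlt ↦ ?_⟩
  have not_isMax : ¬IsMax a := fun h ↦ (hlt.trans_le le_top).ne (h.eq_top ▸ htop)
  obtain ⟨b, hab⟩ := exists_covBy_of_wellFoundedLT not_isMax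
  exact (hf a b hab).2 hlt (not_le.mp (ha.not_prop_of_gt hab.lt))

theorem surjective_on_flag_of_covBy_imp_wcovBy (s : Flag α)
    (hf : ∀ a b, a ⋖ b → f a ⩿ f b) (hbot : f ⊥ = ⊥) (htop : f ⊤ = ⊤) :
    Function.Surjective fun a : s ↦ f a :=
  surjective_of_covBy_imp_wcovBy (fun a b h ↦ hf a b (Flag.coe_covBy_coe.mpr h)) hbot htop

end Flag

section Grid

variable {m n : ℕ}

/-- The rank of a point of the grid `[m] × [n]`, the sum of its coordinates, as an element
of `[m + n]`. -/
def gridRank (p : Fin (m + 1) × Fin (n + 1)) : Fin (m + n + 1) :=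
  ⟨p.1 + p.2, by omega⟩

theorem gridRank_strictMono : StrictMono (gridRank (m := m) (n := n)) := by
  intro p q hpq
  rcases Prod.lt_iff.mp hpq with h | h <;>
    simp only [gridRank, Fin.lt_def, Fin.le_def] at h ⊢ <;> omega

theorem gridRank_covBy_of_covBy {p q : Fin (m + 1) × Fin (n + 1)} (h : p ⋖ q) :
    gridRank p ⋖ gridRank q := by
  rcases Prod.covBy_iff.mp h with ⟨h₁, h₂⟩ | ⟨h₁, h₂⟩ <;>
    simp only [gridRank, Fin.covBy_iff, Nat.covBy_iff_add_one_eq, h₂] at h₁ ⊢ <;> omega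

theorem gridRank_surjective_on_flag (s : Flag (Fin (m + 1) × Fin (n + 1))) :
    Function.Surjective fun p : s ↦ gridRank (p : Fin (m + 1) × Fin (n + 1)) :=
  surjective_on_flag_of_covBy_imp_wcovBy s (fun _ _ h ↦ (gridRank_covBy_of_covBy h).wcovBy) rfl rfl

open Classical in
/-- The identification of a maximal chain of the grid `[m] × [n]` with `[m + n]` by rank. -/
noncomputable def gridFlagIso (s : Flag (Fin (m + 1) × Fin (n + 1))) : s ≃o Fin (m + n + 1) :=
  StrictMono.orderIsoOfSurjective (fun p : s ↦ gridRank p.1)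
    (gridRank_strictMono.comp (Subtype.strictMono_coe _)) (gridRank_surjective_on_flag s)

theorem gridRank_gridFlagIso_symm (s : Flag (Fin (m + 1) × Fin (n + 1))) (i : Fin (m + n + 1)) :
    gridRank ((gridFlagIso s).symm i).1 = i :=
  (gridFlagIso s).apply_symm_apply i

theorem gridFlagIso_symm_gridRank {s : Flag (Fin (m + 1) × Fin (n + 1))}
    {p : Fin (m + 1) × Fin (n + 1)} (hp : p ∈ s) :
    ((gridFlagIso s).symm (gridRank p) : Fin (m + 1) × Fin (n + 1)) = p :=
  congrArg Subtype.val ((gridFlagIso s).symm_apply_apply ⟨p, hp⟩)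

theorem isShuffle_gridFlagIso_symm (s : Flag (Fin (m + 1) × Fin (n + 1))) :
    IsShuffle m n (fun i ↦ ((gridFlagIso s).symm i).1.1)
      (fun i ↦ ((gridFlagIso s).symm i).1.2) := by
  have fst_surjective : Function.Surjective fun p : s ↦ p.1.1 :=
    surjective_on_flag_of_covBy_imp_wcovBy s (fun _ _ h ↦ h.wcovBy.fst) rfl rfl
  have snd_surjective : Function.Surjective fun p : s ↦ p.1.2 :=
    surjective_on_flag_of_covBy_imp_wcovBy s (fun _ _ h ↦ h.wcovBy.snd) rfl rfl
  exact ⟨fun _ _ h ↦ ((gridFlagIso s).symm.monotone h).1,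
    fun _ _ h ↦ ((gridFlagIso s).symm.monotone h).2,
    fst_surjective.comp (gridFlagIso s).symm.surjective,
    snd_surjective.comp (gridFlagIso s).symm.surjective,
    fun i ↦ congrArg Fin.val (gridRank_gridFlagIso_symm s i)⟩

end Grid

theorem factors_through_shuffle_general {m n : ℕ} {ι : Type*} [LinearOrder ι]
    {ζ : ι → Fin (m + 1)} {ζ' : ι → Fin (n + 1)} (hζ : Monotone ζ) (hζ' : Monotone ζ') :
    ∃ (β : Fin (m + n + 1) → Fin (m + 1)) (β' : Fin (m + n + 1) → Fin (n + 1))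
      (φ : ι → Fin (m + n + 1)),
      IsShuffle m n β β' ∧ Monotone φ ∧ (∀ i, ζ i = β (φ i)) ∧ (∀ i, ζ' i = β' (φ i)) := by
  have pair_monotone : Monotone fun i ↦ (ζ i, ζ' i) := hζ.prodMk hζ'
  obtain ⟨s, range_subset⟩ := pair_monotone.isChain_range.exists_subset_flag
  have symm_gridRank (i : ι) : ((gridFlagIso s).symm (gridRank (ζ i, ζ' i))).1 = (ζ i, ζ' i) :=
    gridFlagIso_symm_gridRank (range_subset ⟨i, rfl⟩)
  exact ⟨_, _, fun i ↦ gridRank (ζ i, ζ' i), isShuffle_gridFlagIso_symm s,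
    gridRank_strictMono.monotone.comp pair_monotone,
    fun i ↦ congrArg Prod.fst (symm_gridRank i).symm,
    fun i ↦ congrArg Prod.snd (symm_gridRank i).symm⟩

/-- Every pair of monotone maps `ζ : [u] → [m]`, `ζ' : [u] → [n]` factors through
an `(m,n)`-shuffle via a monotone map `φ : [u] → [m+n]`. -/
theorem factors_through_shuffle (m n u : ℕ)
    (ζ : Fin (u + 1) → Fin (m + 1)) (ζ' : Fin (u + 1) → Fin (n + 1))
    (hζ : Monotone ζ) (hζ' : Monotone ζ') :
    ∃ (β : Fin (m + n + 1) → Fin (m + 1)) (β' : Fin (m + n + 1) → Fin (n + 1))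
      (φ : Fin (u + 1) → Fin (m + n + 1)),
      IsShuffle m n β β' ∧ Monotone φ ∧
        (∀ i, ζ i = β (φ i)) ∧ (∀ i, ζ' i = β' (φ i)) :=
  factors_through_shuffle_general hζ hζ'
end
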